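/- Let 2 ≤ n ≤ l. For each pair (A, B) of nonempty subsets of Fin n with A ∪ B = Fin n, let Irr(A,B) denote the number of irreducible components of the solution set V(A,B) ⊆ (Fin n → Fin l), i.e. the number m of irreducible algebraic sets Y_1, …, Y_m, pairwise not contained in one another, whose union is V(A,B). Then the sum of Irr(A,B) over all such pairs (A, B) equals 4 · n! · 3^{n−2}; consequently, since there are exactly 3^n − 2 such pairs, the average number of irreducible components over all equations in n variables is 4 · n! · 3^{n−2} / (3^n − 2), independently of l. -/

import Mathlib

/-- The solution set of the equation given by the pair (A, B) of nonempty subsets of `Fin n`: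
points `P : Fin n → Fin l` with `min_{i ∈ A} P i = min_{j ∈ B} P j`. -/
def solutionSet {n : ℕ} (l : ℕ) (A B : Finset (Fin n)) (hA : A.Nonempty) (hB : B.Nonempty) :
    Set (Fin n → Fin l) :=
  {P | A.inf' hA P = B.inf' hB P}

/-- A set of points is algebraic if it is the intersection of the solution sets of some
family of equations (pairs of nonempty subsets of `Fin n`). -/
def IsAlgebraicSet (n l : ℕ) (Y : Set (Fin n → Fin l)) : Prop :=
  ∃ (I : Type) (A B : I → Finset (Fin n)) (hA : ∀ i, (A i).Nonempty)
    (hB : ∀ i, (B i).Nonempty), Y = ⋂ i, solutionSet l (A i) (B i) (hA i) (hB i)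

/-- An algebraic set `Y` is irreducible if whenever `Y = Y₁ ∪ … ∪ Yₘ` with each `Yᵢ`
algebraic, then `Y = Yᵢ` for some `i`. -/
def IsIrreducibleAlg (n l : ℕ) (Y : Set (Fin n → Fin l)) : Prop :=
  ∀ (m : ℕ) (Z : Fin m → Set (Fin n → Fin l)),
    (∀ i, IsAlgebraicSet n l (Z i)) → Y = ⋃ i, Z i → ∃ i, Y = Z i

/-- The set of equations in n variables in which every variable occurs: ordered pairs
(A, B) of nonempty subsets of `Fin n` with `A ∪ B = Fin n`. -/
def equationsFinset (n : ℕ) : Finset (Finset (Fin n) × Finset (Fin n)) :=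
  Finset.univ.filter (fun p => p.1.Nonempty ∧ p.2.Nonempty ∧ p.1 ∪ p.2 = Finset.univ)

/-- Closure of a point: all points whose weak order is coarser. -/
def ptClosure {n l : ℕ} (P : Fin n → Fin l) : Set (Fin n → Fin l) :=
  {Q | ∀ i j, P i ≤ P j → Q i ≤ Q j}

lemma self_mem_ptClosure {n l : ℕ} (P : Fin n → Fin l) : P ∈ ptClosure P := fun _ _ h => h

lemma inf_le_aux {n l : ℕ} {P Q : Fin n → Fin l} (hQ : Q ∈ ptClosure P) {A B : Finset (Fin n)}
    (hA : A.Nonempty) (hB : B.Nonempty) (h : A.inf' hA P = B.inf' hB P) :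
    A.inf' hA Q ≤ B.inf' hB Q := by
  apply Finset.le_inf'
  intro b hb
  obtain ⟨a, ha, hae⟩ := Finset.exists_mem_eq_inf' hA P
  refine (Finset.inf'_le Q ha).trans (hQ a b ?_)
  rw [← hae, h]
  exact Finset.inf'_le P hb

lemma ptClosure_subset {n l : ℕ} {P : Fin n → Fin l} {Z : Set (Fin n → Fin l)}
    (hZ : IsAlgebraicSet n l Z) (hP : P ∈ Z) : ptClosure P ⊆ Z := by
  obtain ⟨I, A, B, hA, hB, rfl⟩ := hZ
  intro Q hQ
  rw [Set.mem_iInter] at hP ⊢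
  intro i
  have h : (A i).inf' (hA i) P = (B i).inf' (hB i) P := hP i
  exact le_antisymm (inf_le_aux hQ _ _ h) (inf_le_aux hQ _ _ h.symm)

lemma isAlgebraicSet_ptClosure {n l : ℕ} (P : Fin n → Fin l) :
    IsAlgebraicSet n l (ptClosure P) := by
  refine ⟨{p : Fin n × Fin n // P p.1 ≤ P p.2}, fun p => {p.1.1}, fun p => {p.1.1, p.1.2},
    fun p => by simp, fun p => by simp, ?_⟩
  ext Q
  simp only [ptClosure, solutionSet, Set.mem_iInter, Set.mem_ofPred_eq]
  constructor
  · rintro h ⟨⟨i, j⟩, hij⟩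
    have := h i j hij
    simp [this]
  · intro h i j hij
    have := h ⟨(i, j), hij⟩
    simpa using this

lemma exists_ptClosure_eq {n l : ℕ} {Y : Set (Fin n → Fin l)} (hY : IsAlgebraicSet n l Y)
    (hI : IsIrreducibleAlg n l Y) : ∃ P ∈ Y, Y = ptClosure P := by
  classical
  have e := (Fintype.equivFin Y).symm
  obtain ⟨k, hk⟩ := hI (Fintype.card Y) (fun k => ptClosure (e k).1)
    (fun k => isAlgebraicSet_ptClosure _) (by
      apply Set.Subset.antisymm
      · intro P hP
        rw [Set.mem_iUnion]
        refine ⟨e.symm ⟨P, hP⟩, ?_⟩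
        simpa using self_mem_ptClosure P
      · apply Set.iUnion_subset
        intro k
        exact ptClosure_subset hY (e k).2)
  exact ⟨(e k).1, (e k).2, hk⟩

lemma mem_solutionSet_iff {n l : ℕ} {A B : Finset (Fin n)} (hA : A.Nonempty) (hB : B.Nonempty)
    (hAB : A ∪ B = Finset.univ) (P : Fin n → Fin l) :
    P ∈ solutionSet l A B hA hB ↔
      ∃ a ∈ A, ∃ b ∈ B, (∀ i, P a ≤ P i) ∧ (∀ i, P b ≤ P i) := by
  constructor
  · intro h
    have h : A.inf' hA P = B.inf' hB P := h
    obtain ⟨a, ha, hae⟩ := Finset.exists_mem_eq_inf' hA P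
    obtain ⟨b, hb, hbe⟩ := Finset.exists_mem_eq_inf' hB P
    have hab : P a = P b := by rw [← hae, ← hbe, h]
    have key : ∀ i, P a ≤ P i := by
      intro i
      have hi : i ∈ A ∪ B := by rw [hAB]; exact Finset.mem_univ i
      rcases Finset.mem_union.1 hi with hi | hi
      · rw [← hae]; exact Finset.inf'_le P hi
      · rw [hab, ← hbe]; exact Finset.inf'_le P hi
    exact ⟨a, ha, b, hb, key, hab ▸ key⟩
  · rintro ⟨a, ha, b, hb, h1, h2⟩
    apply le_antisymm
    · exact Finset.le_inf' _ _ fun i _ => (Finset.inf'_le P ha).trans (h1 i)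
    · exact Finset.le_inf' _ _ fun i _ => (Finset.inf'_le P hb).trans (h2 i)

/-- The permutations (rankings) indexing the components of `V(A,B)`. -/
def GoodPerm {n : ℕ} (hn : 2 ≤ n) (A B : Finset (Fin n)) (σ : Equiv.Perm (Fin n)) : Prop :=
  (σ.symm ⟨0, by omega⟩ ∈ A ∧ σ.symm ⟨0, by omega⟩ ∈ B) ∨
  ((σ.symm ⟨0, by omega⟩ ∈ A ∧ σ.symm ⟨0, by omega⟩ ∉ B) ∧
    (σ.symm ⟨1, by omega⟩ ∈ B ∧ σ.symm ⟨1, by omega⟩ ∉ A))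

/-- Generic point attached to a ranking. -/
def genPt {n l : ℕ} (hn : 2 ≤ n) (hnl : n ≤ l) (B : Finset (Fin n)) (σ : Equiv.Perm (Fin n)) :
    Fin n → Fin l := fun i =>
  ⟨if σ.symm ⟨0, by omega⟩ ∈ B then (σ i : ℕ) else max (σ i : ℕ) 1, by
    have := (σ i).2
    split_ifs <;> omega⟩

lemma genPt_mem {n l : ℕ} (hn : 2 ≤ n) (hnl : n ≤ l) {A B : Finset (Fin n)} (hA : A.Nonempty)
    (hB : B.Nonempty) (hAB : A ∪ B = Finset.univ) {σ : Equiv.Perm (Fin n)}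
    (h : GoodPerm hn A B σ) : genPt hn hnl B σ ∈ solutionSet l A B hA hB := by
  rw [mem_solutionSet_iff hA hB hAB]
  rcases h with h | ⟨h1, h2⟩
  · refine ⟨_, h.1, _, h.2, ?_, ?_⟩ <;> intro i <;> simp [genPt, Fin.le_def, h.2]
  · refine ⟨_, h1.1, _, h2.1, ?_, ?_⟩ <;> intro i <;> simp [genPt, Fin.le_def, h1.2]

lemma perm_eq_of_mono {n : ℕ} {σ τ : Equiv.Perm (Fin n)}
    (h : ∀ i j, τ i ≤ τ j → σ i ≤ σ j) : σ = τ := by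
  have hm : Monotone (σ ∘ τ.symm) := by
    intro x y hxy
    exact h _ _ (by simpa using hxy)
  have hs : StrictMono (σ ∘ τ.symm) :=
    hm.strictMono_of_injective (σ.injective.comp τ.symm.injective)
  have h2 : (τ.symm.trans σ) = Equiv.refl _ := by
    have : (OrderIso.ofRelIsoLT ⟨τ.symm.trans σ, by
      intro a b; exact hs.lt_iff_lt⟩) = OrderIso.refl (Fin n) := Subsingleton.elim _ _
    ext x
    have := congrArg (fun (e : Fin n ≃o Fin n) => (e x : ℕ)) this
    exact this
  ext x
  have := congrArg (fun e : Equiv.Perm (Fin n) => (e (τ x) : ℕ)) h2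
  simpa using this

lemma good_antichain {n l : ℕ} (hn : 2 ≤ n) (hnl : n ≤ l) {A B : Finset (Fin n)}
    {σ τ : Equiv.Perm (Fin n)} (hσ : GoodPerm hn A B σ) (hτ : GoodPerm hn A B τ)
    (h : (genPt hn hnl B σ : Fin n → Fin l) ∈ ptClosure (genPt hn hnl B τ)) : σ = τ := by
  have s0 : ∀ i, (σ i : ℕ) = 0 → i = σ.symm ⟨0, by omega⟩ := by
    intro i hi; rw [Equiv.eq_symm_apply]; exact Fin.ext hi
  have s1 : ∀ i, (σ i : ℕ) = 1 → i = σ.symm ⟨1, by omega⟩ := by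
    intro i hi; rw [Equiv.eq_symm_apply]; exact Fin.ext hi
  have t0 : ∀ i, (τ i : ℕ) = 0 → i = τ.symm ⟨0, by omega⟩ := by
    intro i hi; rw [Equiv.eq_symm_apply]; exact Fin.ext hi
  have es0 : (σ (σ.symm ⟨0, by omega⟩) : ℕ) = 0 := by simp
  have es1 : (σ (σ.symm ⟨1, by omega⟩) : ℕ) = 1 := by simp
  have et0 : (τ (τ.symm ⟨0, by omega⟩) : ℕ) = 0 := by simp
  have et1 : (τ (τ.symm ⟨1, by omega⟩) : ℕ) = 1 := by simp
  unfold GoodPerm at hσ hτ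
  have h' : ∀ i j, (if τ.symm ⟨0, by omega⟩ ∈ B then (τ i : ℕ) else max (τ i : ℕ) 1) ≤
      (if τ.symm ⟨0, by omega⟩ ∈ B then (τ j : ℕ) else max (τ j : ℕ) 1) →
      (if σ.symm ⟨0, by omega⟩ ∈ B then (σ i : ℕ) else max (σ i : ℕ) 1) ≤
      (if σ.symm ⟨0, by omega⟩ ∈ B then (σ j : ℕ) else max (σ j : ℕ) 1) := h
  generalize σ.symm ⟨0, _⟩ = a at *
  generalize σ.symm ⟨1, _⟩ = b at *
  generalize τ.symm ⟨0, _⟩ = c at *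
  generalize τ.symm ⟨1, _⟩ = d at *
  apply perm_eq_of_mono
  rcases hσ with hσ | ⟨hσ1, hσ2⟩ <;> rcases hτ with hτ | ⟨hτ1, hτ2⟩
  · simp only [hσ.2, hτ.2, if_true] at h'
    exact h'
  · exfalso
    simp only [hσ.2, hτ1.2, if_true, if_false] at h'
    have h1 := h' c d (by omega)
    have h2 := h' d c (by omega)
    have : c = d := σ.injective (Fin.ext (le_antisymm h1 h2))
    rw [this] at et0; omega
  · exfalso
    simp only [hσ1.2, hτ.2, if_true, if_false] at h'
    have h1 := h' c a (by omega)
    have h2 : (σ c : ℕ) = 0 ∨ (σ c : ℕ) = 1 := by omega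
    rcases h2 with h2 | h2
    · rw [s0 c h2] at hτ; exact hσ1.2 hτ.2
    · rw [s1 c h2] at hτ; exact hσ2.2 hτ.1
  · simp only [hσ1.2, hτ1.2, if_false] at h'
    have h1 := h' c a (by omega)
    have hc : (σ c : ℕ) = 0 := by
      have h2 : (σ c : ℕ) = 0 ∨ (σ c : ℕ) = 1 := by omega
      rcases h2 with h2 | h2
      · exact h2
      · rw [s1 c h2] at hτ1; exact absurd hσ2.1 hτ1.2
    have hne : ∀ i, i ≠ c → (1 : ℕ) ≤ τ i ∧ (1 : ℕ) ≤ σ i := by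
      intro i hi
      constructor
      · by_contra h0; exact hi (t0 i (by omega))
      · by_contra h0; exact hi ((s0 i (by omega)).trans (s0 c hc).symm)
    intro i j hij
    rw [Fin.le_def] at hij ⊢
    by_cases hi : i = c
    · subst hi; omega
    by_cases hj : j = c
    · subst hj; have := hne i hi; omega
    have := hne i hi
    have := hne j hj
    have := h' i j (by omega)
    omega

lemma exists_ranking {n : ℕ} (f : Fin n → ℕ) :
    ∃ σ : Equiv.Perm (Fin n), ∀ i j, σ i ≤ σ j → f i ≤ f j := by
  refine ⟨(Tuple.sort f).symm, fun i j hij => ?_⟩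
  have := Tuple.monotone_sort f hij
  simpa using this

lemma exists_good {n l : ℕ} (hn : 2 ≤ n) (hnl : n ≤ l) {A B : Finset (Fin n)} (hA : A.Nonempty)
    (hB : B.Nonempty) (hAB : A ∪ B = Finset.univ) {P : Fin n → Fin l}
    (hP : P ∈ solutionSet l A B hA hB) :
    ∃ σ, GoodPerm hn A B σ ∧ P ∈ ptClosure (genPt hn hnl B σ) := by
  rw [mem_solutionSet_iff hA hB hAB] at hP
  obtain ⟨a, ha, b, hb, hma, hmb⟩ := hP
  simp only [Fin.le_def] at hma hmb
  by_cases hc : ∃ c ∈ A, c ∈ B ∧ ∀ i, (P c : ℕ) ≤ P i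
  · obtain ⟨c, hcA, hcB, hmc⟩ := hc
    obtain ⟨σ, hσ⟩ := exists_ranking (fun i => 3 * (P i : ℕ) + if i = c then 0 else 2)
    simp only [Fin.le_def] at hσ
    have h0 : σ.symm ⟨0, by omega⟩ = c := by
      by_contra hne
      have h1 := hσ (σ.symm ⟨0, by omega⟩) c (by simp)
      have := hmc (σ.symm ⟨0, by omega⟩)
      simp only [hne, if_true, if_false] at h1
      omega
    refine ⟨σ, Or.inl (by rw [h0]; exact ⟨hcA, hcB⟩), ?_⟩
    intro i j hij
    simp only [genPt, h0, hcB, if_true, Fin.le_def] at hij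
    have := hσ i j hij
    rw [Fin.le_def]
    split_ifs at this <;> omega
  · have haB : a ∉ B := fun h => hc ⟨a, ha, h, hma⟩
    have hbA : b ∉ A := fun h => hc ⟨b, h, hb, hmb⟩
    have hab : a ≠ b := fun h => haB (h ▸ hb)
    obtain ⟨σ, hσ⟩ := exists_ranking
      (fun i => 3 * (P i : ℕ) + if i = a then 0 else if i = b then 1 else 2)
    simp only [Fin.le_def] at hσ
    have h0 : σ.symm ⟨0, by omega⟩ = a := by
      by_contra hne
      have h1 := hσ (σ.symm ⟨0, by omega⟩) a (by simp)
      have := hma (σ.symm ⟨0, by omega⟩)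
      simp only [hne, if_true, if_false] at h1
      split_ifs at h1 <;> omega
    have e0 : (σ a : ℕ) = 0 := by rw [← h0]; simp
    have u0 : ∀ i, (σ i : ℕ) = 0 → i = a := by
      intro i hi; rw [← h0, Equiv.eq_symm_apply]; exact Fin.ext hi
    have u1 : ∀ i, (σ i : ℕ) = 1 → i = σ.symm ⟨1, by omega⟩ := by
      intro i hi; rw [Equiv.eq_symm_apply]; exact Fin.ext hi
    have e1 : (σ (σ.symm ⟨1, by omega⟩) : ℕ) = 1 := by simp
    have hb0 : (σ b : ℕ) ≠ 0 := fun h => hab (u0 b h).symm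
    have h1 : σ.symm ⟨1, by omega⟩ = b := by
      generalize σ.symm ⟨1, _⟩ = d at *
      by_contra hne
      have h1 := hσ d b (by omega)
      have hda : d ≠ a := by rintro rfl; omega
      have := hmb d
      simp only [hne, hda, hab.symm, if_true, if_false] at h1
      omega
    refine ⟨σ, Or.inr (by rw [h0, h1]; exact ⟨⟨ha, haB⟩, ⟨hb, hbA⟩⟩), ?_⟩
    intro i j hij
    simp only [genPt, h0, haB, if_false, Fin.le_def] at hij
    rw [Fin.le_def]
    by_cases hle : (σ i : ℕ) ≤ σ j
    · have := hσ i j hle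
      split_ifs at this <;> omega
    · have hj : j = a := u0 j (by omega)
      have hi : i = b := (u1 i (by omega)).trans h1
      rw [hi, hj]; exact hmb a

lemma irr_eq {n l : ℕ} (hn : 2 ≤ n) (hnl : n ≤ l) {A B : Finset (Fin n)} (hA : A.Nonempty)
    (hB : B.Nonempty) (hAB : A ∪ B = Finset.univ) (m : ℕ) (Y : Fin m → Set (Fin n → Fin l))
    (h1 : ∀ i, IsAlgebraicSet n l (Y i) ∧ IsIrreducibleAlg n l (Y i))
    (h2 : ∀ i j, i ≠ j → ¬ Y i ⊆ Y j)
    (h3 : (⋃ i, Y i) = solutionSet l A B hA hB) :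
    m = Nat.card {σ // GoodPerm hn A B σ} := by
  classical
  have hcov : ∀ σ, GoodPerm hn A B σ → ∃ j, genPt hn hnl B σ ∈ Y j := by
    intro σ hσ
    have := genPt_mem hn hnl hA hB hAB hσ
    rw [← h3] at this
    exact Set.mem_iUnion.1 this
  have hEq : ∀ i, ∃ σ, GoodPerm hn A B σ ∧ Y i = ptClosure (genPt hn hnl B σ) := by
    intro i
    obtain ⟨P, hP, hYP⟩ := exists_ptClosure_eq (h1 i).1 (h1 i).2
    have hPV : P ∈ solutionSet l A B hA hB := by
      rw [← h3]; exact Set.mem_iUnion.2 ⟨i, hP⟩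
    obtain ⟨σ, hσ, hPσ⟩ := exists_good hn hnl hA hB hAB hPV
    obtain ⟨j, hj⟩ := hcov σ hσ
    have s1 : Y i ⊆ ptClosure (genPt hn hnl B σ) := by
      rw [hYP]; exact ptClosure_subset (isAlgebraicSet_ptClosure _) hPσ
    have s2 := ptClosure_subset (h1 j).1 hj
    have hij : i = j := by
      by_contra hne
      exact h2 i j hne (s1.trans s2)
    subst hij
    exact ⟨σ, hσ, s1.antisymm s2⟩
  choose s hs hsY using hEq
  have hbij : Function.Bijective (fun i => (⟨s i, hs i⟩ : {σ // GoodPerm hn A B σ})) := by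
    constructor
    · intro i j hij
      by_contra hne
      apply h2 i j hne
      have : s i = s j := congrArg Subtype.val hij
      rw [hsY i, hsY j, this]
    · rintro ⟨σ, hσ⟩
      obtain ⟨j, hj⟩ := hcov σ hσ
      refine ⟨j, Subtype.ext ?_⟩
      rw [hsY j] at hj
      exact (good_antichain hn hnl hσ (hs j) hj).symm
  rw [← Nat.card_eq_of_bijective _ hbij, Nat.card_fin]

/-- State of a variable: 0 = only in A, 1 = only in B, 2 = in both. -/
def varState {n : ℕ} (p : Finset (Fin n) × Finset (Fin n)) (i : Fin n) : Fin 3 :=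
  if i ∉ p.2 then 0 else if i ∉ p.1 then 1 else 2

lemma card_states {n : ℕ} (S : Fin n → Finset (Fin 3)) :
    (Finset.univ.filter (fun p : Finset (Fin n) × Finset (Fin n) =>
      p.1 ∪ p.2 = Finset.univ ∧ ∀ i, varState p i ∈ S i)).card = ∏ i, (S i).card := by
  rw [← Fintype.card_piFinset]
  refine Finset.card_nbij' varState
    (fun f => (Finset.univ.filter (fun i => f i ≠ 1), Finset.univ.filter (fun i => f i ≠ 0)))
    ?_ ?_ ?_ ?_
  · intro p hp
    simp only [Finset.coe_filter, Finset.mem_univ, true_and, Set.mem_ofPred_eq] at hp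
    simpa using hp.2
  · intro f hf
    simp only [Finset.mem_coe, Fintype.mem_piFinset] at hf
    simp only [Finset.coe_filter, Finset.mem_univ, true_and, Set.mem_ofPred_eq]
    constructor
    · ext i
      simp only [Finset.mem_union, Finset.mem_filter, Finset.mem_univ, true_and, iff_true]
      generalize f i = x
      revert x; decide
    · intro i
      have := hf i
      simp only [varState, Finset.mem_filter, Finset.mem_univ, true_and]
      generalize f i = x at *
      fin_cases x <;> simpa using this
  · rintro ⟨A, B⟩ hp
    simp only [Finset.coe_filter, Finset.mem_univ, true_and, Set.mem_ofPred_eq] at hp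
    have hp := hp.1
    rw [Finset.eq_univ_iff_forall] at hp
    simp only [Finset.mem_union] at hp
    refine Prod.ext ?_ ?_ <;> ext i <;> have := hp i <;>
      by_cases h1 : i ∈ A <;> by_cases h2 : i ∈ B <;> simp_all [varState]
  · intro f hf
    ext1 i
    simp only [varState, Finset.mem_filter, Finset.mem_univ, true_and]
    generalize f i = x
    revert x; decide

lemma card_equations {n : ℕ} (hn : 2 ≤ n) : (equationsFinset n).card + 2 = 3 ^ n := by
  have h := card_states (n := n) (fun _ => Finset.univ)
  simp only [Finset.mem_univ, implies_true, and_true, Finset.card_univ, Fintype.card_fin,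
    Finset.prod_const] at h
  have : Nonempty (Fin n) := ⟨⟨0, by omega⟩⟩
  have hne : (Finset.univ : Finset (Fin n)) ≠ ∅ := Finset.univ_nonempty.ne_empty
  have hu : (Finset.univ.filter (fun p : Finset (Fin n) × Finset (Fin n) =>
      p.1 ∪ p.2 = Finset.univ)) = equationsFinset n ∪ {(∅, Finset.univ), (Finset.univ, ∅)} := by
    ext ⟨A, B⟩
    simp only [equationsFinset, Finset.mem_filter, Finset.mem_univ, true_and, Finset.mem_union,
      Finset.mem_insert, Finset.mem_singleton, Prod.mk.injEq]
    rcases A.eq_empty_or_nonempty with rfl | hA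
    · simp [hne.symm]
    rcases B.eq_empty_or_nonempty with rfl | hB
    · simp [hne.symm]
    · simp [hA, hB, hA.ne_empty, hB.ne_empty]
  rw [hu, Finset.card_union_of_disjoint, Finset.card_pair] at h
  · exact h
  · simp [hne, hne.symm]
  · simp [equationsFinset]

lemma card_good {n : ℕ} (hn : 2 ≤ n) (σ : Equiv.Perm (Fin n)) [DecidablePred
    (fun p : Finset (Fin n) × Finset (Fin n) => GoodPerm hn p.1 p.2 σ)] :
    ((equationsFinset n).filter (fun p => GoodPerm hn p.1 p.2 σ)).card = 4 * 3 ^ (n - 2) := by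
  classical
  have hzo : σ.symm ⟨0, by omega⟩ ≠ σ.symm ⟨1, by omega⟩ := by simp
  unfold GoodPerm at *
  generalize σ.symm ⟨0, _⟩ = a at *
  generalize σ.symm ⟨1, _⟩ = b at *
  have c1 := card_states (n := n) (fun i => if i = a then {2} else Finset.univ)
  have c2 := card_states (n := n) (fun i => if i = a then {0} else if i = b then {1}
    else Finset.univ)
  have p1 : (∏ i, (if i = a then ({2} : Finset (Fin 3)) else Finset.univ).card)
      = 3 ^ (n - 1) := by
    rw [← Finset.mul_prod_erase _ _ (Finset.mem_univ a)]
    rw [Finset.prod_congr rfl (g := fun _ => 3)]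
    · simp
    · intro i hi; simp [Finset.ne_of_mem_erase hi]
  have p2 : (∏ i, (if i = a then ({0} : Finset (Fin 3)) else if i = b then {1}
      else Finset.univ).card) = 3 ^ (n - 2) := by
    rw [← Finset.mul_prod_erase _ _ (Finset.mem_univ a),
      ← Finset.mul_prod_erase _ _ (Finset.mem_erase.2 ⟨hzo.symm, Finset.mem_univ b⟩)]
    rw [Finset.prod_congr rfl (g := fun _ => 3)]
    · simp [hzo.symm, Finset.card_erase_of_mem, Nat.sub_sub]
    · intro i hi
      simp only [Finset.mem_erase] at hi
      simp [hi.1, hi.2.1]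
  rw [p1] at c1
  rw [p2] at c2
  have e : 4 * 3 ^ (n - 2) = 3 ^ (n - 1) + 3 ^ (n - 2) := by
    obtain ⟨k, rfl⟩ := Nat.exists_eq_add_of_le hn
    rw [show 2 + k - 1 = k + 1 by omega, show 2 + k - 2 = k by omega, pow_succ]; ring
  rw [e, ← c1, ← c2, ← Finset.card_union_of_disjoint]
  · congr 1
    ext ⟨A, B⟩
    have q1 : (∀ i, varState (A, B) i ∈ (if i = a then ({2} : Finset (Fin 3)) else Finset.univ))
        ↔ (a ∈ A ∧ a ∈ B) := by
      constructor
      · intro h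
        have := h a
        simp only [varState, if_true, Finset.mem_singleton] at this
        by_cases h1 : a ∈ A <;> by_cases h2 : a ∈ B <;> simp_all
      · intro h i
        by_cases hi : i = a
        · subst hi; simp [varState, h]
        · simp [hi]
    have q2 : A ∪ B = Finset.univ → ((∀ i, varState (A, B) i ∈ (if i = a then ({0} : Finset (Fin 3)) else if i = b then {1}
        else Finset.univ)) ↔ ((a ∈ A ∧ a ∉ B) ∧ (b ∈ B ∧ b ∉ A))) := by
      intro hu
      rw [Finset.eq_univ_iff_forall] at hu
      simp only [Finset.mem_union] at hu
      constructor
      · intro h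
        have ha := h a
        have hb := h b
        have := hu a
        have := hu b
        simp only [varState, if_true, hzo.symm, if_false, Finset.mem_singleton] at ha hb
        by_cases h1 : a ∈ A <;> by_cases h2 : a ∈ B <;>
          by_cases h3 : b ∈ A <;> by_cases h4 : b ∈ B <;> simp_all
      · intro h i
        by_cases hi : i = a
        · subst hi; simp [varState, h]
        by_cases hi : i = b
        · subst hi; simp [varState, h, hzo.symm]
        · simp [*]
    simp only [Finset.mem_union, Finset.mem_filter, equationsFinset, Finset.mem_univ, true_and, q1]
    by_cases hu : A ∪ B = Finset.univ
    · rw [q2 hu]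
      simp only [hu, true_and, and_true]
      constructor
      · exact fun h => h.2
      · intro h
        refine ⟨?_, h⟩
        rcases h with h | h
        · exact ⟨⟨a, h.1⟩, ⟨a, h.2⟩⟩
        · exact ⟨⟨a, h.1.1⟩, ⟨b, h.2.1⟩⟩
    · simp [hu]
  · rw [Finset.disjoint_left]
    intro p hp hq
    simp only [Finset.mem_filter] at hp hq
    have h1 := hp.2.2 a
    have h2 := hq.2.2 a
    simp only [if_true, Finset.mem_singleton] at h1 h2
    rw [h1] at h2
    exact absurd h2 (by decide)


/-- Let 2 ≤ n ≤ l. For each pair (A, B) of nonempty subsets of `Fin n` with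
`A ∪ B = Fin n`, let `Irr A B` denote the number of irreducible components of the solution
set `V(A,B) ⊆ (Fin n → Fin l)`, i.e. the number m of irreducible algebraic sets
Y₁, …, Yₘ, pairwise not contained in one another, whose union is `V(A,B)`. Then the sum of
`Irr A B` over all such pairs (A, B) equals `4 · n! · 3^{n−2}`; consequently, since there
are exactly `3^n − 2` such pairs, the average number of irreducible components over all
equations in n variables is `4 · n! · 3^{n−2} / (3^n − 2)`, independently of l. -/
theorem stmt_19 (n l : ℕ) (hn : 2 ≤ n) (hnl : n ≤ l)
    (Irr : Finset (Fin n) → Finset (Fin n) → ℕ)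
    (hIrr : ∀ A B : Finset (Fin n), ∀ (hA : A.Nonempty) (hB : B.Nonempty),
      A ∪ B = Finset.univ →
      ∃ Y : Fin (Irr A B) → Set (Fin n → Fin l),
        (∀ i, IsAlgebraicSet n l (Y i) ∧ IsIrreducibleAlg n l (Y i)) ∧
        (∀ i j, i ≠ j → ¬ Y i ⊆ Y j) ∧
        (⋃ i, Y i) = solutionSet l A B hA hB) :
    (∑ p ∈ equationsFinset n, Irr p.1 p.2) = 4 * n.factorial * 3 ^ (n - 2) ∧
    ((∑ p ∈ equationsFinset n, Irr p.1 p.2 : ℕ) : ℚ) / ((equationsFinset n).card : ℚ)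
      = (4 * n.factorial * 3 ^ (n - 2) : ℚ) / ((3 : ℚ) ^ n - 2) := by
  classical
  have hsum : (∑ p ∈ equationsFinset n, Irr p.1 p.2) = 4 * n.factorial * 3 ^ (n - 2) := by
    have h1 : ∀ p ∈ equationsFinset n, Irr p.1 p.2 =
        ((Finset.univ : Finset (Equiv.Perm (Fin n))).filter
          (fun σ => GoodPerm hn p.1 p.2 σ)).card := by
      rintro ⟨A, B⟩ hp
      simp only [equationsFinset, Finset.mem_filter, Finset.mem_univ, true_and] at hp
      obtain ⟨Y, y1, y2, y3⟩ := hIrr A B hp.1 hp.2.1 hp.2.2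
      rw [← Fintype.card_subtype, ← Nat.card_eq_fintype_card]
      exact irr_eq hn hnl hp.1 hp.2.1 hp.2.2 _ Y y1 y2 y3
    rw [Finset.sum_congr rfl h1]
    have h2 := Finset.sum_card_bipartiteAbove_eq_sum_card_bipartiteBelow
      (s := equationsFinset n) (t := (Finset.univ : Finset (Equiv.Perm (Fin n))))
      (fun p σ => GoodPerm hn p.1 p.2 σ)
    simp only [Finset.bipartiteAbove, Finset.bipartiteBelow] at h2
    rw [h2, Finset.sum_congr rfl (fun σ _ => card_good hn σ)]
    simp only [Finset.sum_const, Finset.card_univ, Fintype.card_perm, Fintype.card_fin,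
      smul_eq_mul]
    ring
  refine ⟨hsum, ?_⟩
  have hc : ((equationsFinset n).card : ℚ) = (3 : ℚ) ^ n - 2 := by
    have := card_equations hn
    rw [eq_sub_iff_add_eq]
    exact_mod_cast this
  rw [hc, hsum]
  push_cast
  rfl
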